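/- Let R be a Noetherian ring, f_1,…,f_c a permutable regular sequence, M = H^c_{(f_1,…,f_c)}(R). For a subset T ⊆ {1,…,c} with complement T̃, the annihilator (0 :_M 𝐟_{T̃}) of the ideal generated by the subsequence indexed by T̃ is isomorphic as an R-module to H^{|T|}_{𝐟_T}(R/𝐟_{T̃}), the top local cohomology of R/𝐟_{T̃} with support in the ideal generated by the subsequence indexed by T. -/

import Mathlib

/-!
Write `A` for the elements `f i` with `i ∉ T` and `B` for those with `i ∈ T`, and let `I` and `J` be
the ideals generated by all the `f i` and by `B`. Permutability makes `A` followed by `B` a regular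
sequence. Then

  `(0 :_{H^c_I(R)} A) ≅ H^{|T|}_I(R ⧸ (A)) ≅ H^{|T|}_J(R ⧸ (A))`.

For the first isomorphism (`LC.exists_iso_torsion`): if `x` is regular on `M` and the local
cohomology of `M` vanishes below degree `k + 1`, the long exact sequence of `0 → M → M → M ⧸ xM → 0`
identifies `H^k_I(M ⧸ xM)` with the `x`-torsion of `H^{k+1}_I(M)`, and shows that `M ⧸ xM` has
vanishing local cohomology below degree `k`. Iterate over the elements of `A`; the initial vanishing
below degree `c` is `LC.vanishing`.

For the second (`LC.change_bijective`): the ideals `J` and `I` agree modulo `A`, so the claim is a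
case of independence of base. It is proved by induction over a regular sequence `rs` in `J` of length
`|T|`: on `M ⧸ (rs)M`, which is killed by `I`, both local cohomologies are the module itself in
degree `0` and the comparison is injective in degree `1`; both facts climb by one degree with each
element of `rs`, using that local cohomology is torsion.

Mathlib defines local cohomology as a colimit, in a category of functors, of left derived functors of
`Hom(-, N)`, whereas long exact sequences exist for `Abelian.Ext`. The two `Ext` are therefore
compared through projective resolutions (`extEquiv`), and `localCohomology` is replaced by a direct
limit `LC` of modules `Abelian.Ext` (`localCohomologyEquiv`).
-/

noncomputable section

open CategoryTheory Limits Abelian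

/-! ### Comparison of the two definitions of Ext -/

lemma comp_inv_aux {V : Type*} [Category* V] {A B A' B' : V} (a : A' ≅ A) (b : B' ≅ B) (m : A ⟶ B) (m' : A' ⟶ B')
  (h : a.hom ≫ m = m' ≫ b.hom) : m ≫ b.inv = a.inv ≫ m' := by
  rw [Iso.comp_inv_eq, Category.assoc, ← h, Iso.inv_hom_id_assoc]

lemma paste_aux {V : Type*} [Category* V] {A B C A' B' C' : V} {m : A ⟶ A'} {m₁ : B ⟶ B'} {m₂ : C ⟶ C'}
  {x : A ⟶ B} {x' : A' ⟶ B'} {y : B ⟶ C} {y' : B' ⟶ C'} (h₁ : m ≫ x' = x ≫ m₁) (h₂ : m₁ ≫ y' = y ≫ m₂) :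
   m ≫ (x' ≫ y') = (x ≫ y) ≫ m₂ := by
  rw [reassoc_of% h₁, h₂, Category.assoc]

lemma homologyUnop_naturality {V : Type*} [Category* V] [Abelian V] {ι : Type*} {c : ComplexShape ι}
   {K L : HomologicalComplex Vᵒᵖ c} (φ : K ⟶ L) (i : ι) :
   (HomologicalComplex.homologyMap φ i).unop ≫ (K.homologyUnop i).inv =
    (L.homologyUnop i).inv ≫ HomologicalComplex.homologyMap ((HomologicalComplex.unopFunctor V c).map φ.op) i :=
  comp_inv_aux _ _ _ _ (congrArg Quiver.Hom.unop
    (HomologicalComplex.homologyOp_hom_naturality ((HomologicalComplex.unopFunctor V c).map φ.op) i))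

variable {R : Type} [CommRing R]

/-- The map of cochain complexes `Hom(P, Y) ⟶ Hom(P', Y)` given by precomposition with a map
`P' ⟶ P` of projective resolutions. -/
def yonedaMap {X X' : ModuleCat.{0} R} {P : ProjectiveResolution X} {P' : ProjectiveResolution X'}
    (φ : P'.complex ⟶ P.complex) (Y : ModuleCat.{0} R) :
   P.complex.linearYonedaObj R Y ⟶ P'.complex.linearYonedaObj R Y :=
   (HomologicalComplex.unopFunctor _ _).map ((((linearYoneda R _).obj Y).rightOp.mapHomologicalComplex _).map φ).op

lemma yonedaMap_f {X X' : ModuleCat.{0} R} {P : ProjectiveResolution X} {P' : ProjectiveResolution X'}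
    (φ : P'.complex ⟶ P.complex) (Y : ModuleCat.{0} R) (n : ℕ) (f : P.complex.X n ⟶ Y):
   (yonedaMap φ Y).f n f = φ.f n ≫ f := rfl

/-- Mathlib's identification of the left-derived-functor `Ext` with the cohomology of `Hom(P, Y)` is
natural in the resolved variable. -/
lemma isoExt_nat {X X' : ModuleCat.{0} R} {P : ProjectiveResolution X} {P' : ProjectiveResolution X'}
    {g : X' ⟶ X} (φ : ProjectiveResolution.Hom P' P g) (Y : ModuleCat.{0} R) (n : ℕ) :
    ((_root_.Ext R (ModuleCat R) n).map g.op).app Y ≫ (P'.isoExt n Y).hom = (P.isoExt n Y).hom ≫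
      HomologicalComplex.homologyMap (yonedaMap φ.hom Y) n := by
  refine paste_aux (congrArg Quiver.Hom.unop (ProjectiveResolution.isoLeftDerivedObj_inv_naturality g P' P φ.hom ?_
    ((linearYoneda R _).obj Y).rightOp n))
    (homologyUnop_naturality ((((linearYoneda R _).obj Y).rightOp.mapHomologicalComplex _).map φ.hom) n)
  have := φ.hom_f_zero_comp_π_f_zero
  rwa [ChainComplex.single₀_map_f_zero] at this

open HomologicalComplex

lemma exists_cycle (K : CochainComplex (ModuleCat.{0} R) ℕ) (n : ℕ) (x : K.X n) (hx : K.d n (n+1) x = 0) :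
    ∃ y : K.cycles n, K.iCycles n y = x :=
  ⟨K.cyclesMk (C := ModuleCat R) x (n+1) (by simp) hx, K.i_cyclesMk (C := ModuleCat R) x (n+1) (by simp) hx⟩

lemma iCycles_inj (K : CochainComplex (ModuleCat.{0} R) ℕ) (n : ℕ) : Function.Injective (K.iCycles n) :=
   (ModuleCat.mono_iff_injective _).1 inferInstance

/-- Cocycles, given as elements of the kernel of the differential, as elements of the categorical
object of cycles. -/
def cocycleToCycles (K : CochainComplex (ModuleCat.{0} R) ℕ) (n : ℕ) :
    LinearMap.ker (K.d n (n+1)).hom →ₗ[R] K.cycles n where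
  toFun x := (exists_cycle K n x.1 x.2).choose
  map_add' x y := by
    apply iCycles_inj
    have h := fun z : LinearMap.ker (K.d n (n+1)).hom => (exists_cycle K n z.1 z.2).choose_spec
    rw [h, map_add, h, h]; rfl
  map_smul' r x := by
    apply iCycles_inj
    have h := fun z : LinearMap.ker (K.d n (n+1)).hom => (exists_cycle K n z.1 z.2).choose_spec
    rw [h, map_smul, h]; rfl

lemma iCycles_cocycleToCycles (K : CochainComplex (ModuleCat.{0} R) ℕ) (n : ℕ) (x : LinearMap.ker (K.d n (n+1)).hom) :
   K.iCycles n (cocycleToCycles K n x) = x.1 := (exists_cycle K n x.1 x.2).choose_spec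

/-- The cohomology class of a cocycle. -/
def cocycleClass (K : CochainComplex (ModuleCat.{0} R) ℕ) (n : ℕ) :
    LinearMap.ker (K.d n (n+1)).hom →ₗ[R] K.homology n := (K.homologyπ n).hom ∘ₗ cocycleToCycles K n

lemma cocycleClass_surjective (K : CochainComplex (ModuleCat.{0} R) ℕ) (n : ℕ) :
    Function.Surjective (cocycleClass K n) := by
  intro z
  obtain ⟨y, rfl⟩ := (ModuleCat.epi_iff_surjective (K.homologyπ n)).1 inferInstance z
  refine ⟨⟨K.iCycles n y, ?_⟩, ?_⟩
  · have := K.iCycles_d n (n+1)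
    exact congrArg (fun f => f y) (congrArg ModuleCat.Hom.hom this)
  · change K.homologyπ n _ = _
    congr 1
    apply iCycles_inj
    rw [iCycles_cocycleToCycles]

lemma cocycleClass_eq_zero_iff (K : CochainComplex (ModuleCat.{0} R) ℕ) (n : ℕ) (x : LinearMap.ker (K.d n (n+1)).hom) :
    cocycleClass K n x = 0 ↔ ∃ y, K.d ((ComplexShape.up ℕ).prev n) n y = x.1 := by
  have hex : (ShortComplex.mk _ _ (K.toCycles_comp_homologyπ ((ComplexShape.up ℕ).prev n) n)).Exact :=
    ShortComplex.exact_of_g_is_cokernel _ (K.homologyIsCokernel _ n rfl)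
  have ht := K.toCycles_i ((ComplexShape.up ℕ).prev n) n
  constructor
  · intro h
    obtain ⟨y, hy⟩ := (ShortComplex.moduleCat_exact_iff _).1 hex (cocycleToCycles K n x) h
    refine ⟨y, ?_⟩
    rw [← ht, ← iCycles_cocycleToCycles, ← hy]; rfl
  · rintro ⟨y, hy⟩
    have : cocycleToCycles K n x = K.toCycles _ n y := by
      apply iCycles_inj
      rw [iCycles_cocycleToCycles, ← hy, ← ht]; rfl
    change K.homologyπ n _ = 0
    rw [this]
    exact congrArg (fun f => f y) (congrArg ModuleCat.Hom.hom (K.toCycles_comp_homologyπ ((ComplexShape.up ℕ).prev n) n))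

lemma homologyMap_cocycleClass {K L : CochainComplex (ModuleCat.{0} R) ℕ} (φ : K ⟶ L) (n : ℕ)
   (x : LinearMap.ker (K.d n (n+1)).hom) (y : LinearMap.ker (L.d n (n+1)).hom) (h : φ.f n x.1 = y.1) :
   homologyMap φ n (cocycleClass K n x) = cocycleClass L n y := by
  have h1 : cyclesMap φ n (cocycleToCycles K n x) = cocycleToCycles L n y := by
    apply iCycles_inj
    rw [iCycles_cocycleToCycles, ← h, ← iCycles_cocycleToCycles]
    exact congrArg (fun f => f (cocycleToCycles K n x)) (congrArg ModuleCat.Hom.hom (cyclesMap_i φ n))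
  change _ = L.homologyπ n _
  rw [← h1]
  exact congrArg (fun f => f (cocycleToCycles K n x)) (congrArg ModuleCat.Hom.hom (homologyπ_naturality φ n))

variable {X : ModuleCat.{0} R} (P : ProjectiveResolution X) (Y : ModuleCat.{0} R) (n : ℕ)

/-- The class in `Abelian.Ext X Y n` of an `n`-cocycle of `Hom(P, Y)`. -/
def cocycleExt :
   LinearMap.ker ((P.complex.linearYonedaObj R Y).d n (n+1)).hom →ₗ[R] Abelian.Ext.{0} X Y n where
  toFun z := P.extMk z.1 (n+1) rfl z.2
  map_add' x y := (P.add_extMk _ _ _ rfl x.2 y.2).symm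
  map_smul' r x := by
    rw [RingHom.id_apply, Abelian.Ext.smul_eq_comp_mk₀]
    refine Eq.trans ?_ (P.extMk_comp_mk₀ _ _ rfl x.2 _).symm
    congr 1

lemma cocycleExt_surjective : Function.Surjective (cocycleExt P Y n) := by
  intro z
  obtain ⟨f, hf, rfl⟩ := P.extMk_surjective z (n+1) rfl
  exact ⟨⟨f, hf⟩, rfl⟩

/-- In degree `0` there are no coboundaries. The library criterion `extMk_eq_zero_iff` covers only
positive degrees, so this case is read off from the complex extended by zero to `ℤ`. -/
lemma extMk_zero_eq_zero (f : P.complex.X 0 ⟶ Y) (hf : P.complex.d 1 0 ≫ f = 0) (h : P.extMk f 1 rfl hf = 0) : f = 0 := by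
  open CochainComplex HomComplex in
  rw [← P.extEquivCohomologyClass.apply_eq_iff_eq, P.extEquivCohomologyClass_extMk, P.extEquivCohomologyClass_zero,
    CohomologyClass.mk_eq_zero_iff, Cocycle.toSingleMk_mem_coboundaries_iff _ _ _ _ _ 1 (by lia)] at h
  obtain ⟨g, hg⟩ := h
  have hz : IsZero (P.cochainComplex.X 1) := CochainComplex.isZero_of_isStrictlyLE P.cochainComplex 0 1
  rw [hz.eq_of_src g 0, comp_zero] at hg
  exact (Preadditive.IsIso.comp_left_eq_zero _ _).1 hg.symm

lemma cocycleExt_eq_zero_iff (x : LinearMap.ker ((P.complex.linearYonedaObj R Y).d n (n+1)).hom) :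
    cocycleExt P Y n x = 0 ↔ ∃ y, (P.complex.linearYonedaObj R Y).d ((ComplexShape.up ℕ).prev n) n y = x.1 := by
  rcases n with _ | n
  · have h0 : (P.complex.linearYonedaObj R Y).d ((ComplexShape.up ℕ).prev 0) 0 = 0 :=
      HomologicalComplex.shape _ _ _ (by simp [ComplexShape.prev])
    rw [h0]
    refine ⟨fun h => ⟨0, ?_⟩, ?_⟩
    · exact (extMk_zero_eq_zero P Y x.1 x.2 h).symm
    · rintro ⟨y, hy⟩
      have : x = 0 := Subtype.ext hy.symm
      rw [this, map_zero]
  · rw [CochainComplex.prev_nat_succ]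
    exact P.extMk_eq_zero_iff x.1 (n+1+1) rfl x.2 n rfl

/-- The cohomology of `Hom(P, Y)` computes `Abelian.Ext X Y`: the two quotients of the module of
cocycles have the same kernel. -/
def homologyEquivExt : (P.complex.linearYonedaObj R Y).homology n ≃ₗ[R] Abelian.Ext.{0} X Y n :=
  ((cocycleClass _ n).quotKerEquivOfSurjective (cocycleClass_surjective _ n)).symm ≪≫ₗ
   Submodule.quotEquivOfEq _ _ (by
     ext x
     rw [LinearMap.mem_ker, LinearMap.mem_ker, cocycleClass_eq_zero_iff, cocycleExt_eq_zero_iff]) ≪≫ₗ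
   (cocycleExt P Y n).quotKerEquivOfSurjective (cocycleExt_surjective _ _ _)

lemma homologyEquivExt_apply (x) : homologyEquivExt P Y n (cocycleClass _ n x) = cocycleExt P Y n x := by
  have : ((cocycleClass _ n).quotKerEquivOfSurjective (cocycleClass_surjective _ n)).symm (cocycleClass _ n x) =
    Submodule.Quotient.mk x := by
    rw [LinearEquiv.symm_apply_eq]; rfl
  simp only [homologyEquivExt, LinearEquiv.trans_apply]
  rw [this]; rfl

lemma homologyEquivExt_nat {X' : ModuleCat.{0} R} {P} {P' : ProjectiveResolution X'}
    {g : X' ⟶ X} (φ : ProjectiveResolution.Hom P' P g) (z) :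
    homologyEquivExt P' Y n (homologyMap (yonedaMap φ.hom Y) n z) =
    (Ext.mk₀ g).precompOfLinear R Y (zero_add n) (homologyEquivExt P Y n z) := by
  obtain ⟨x, rfl⟩ := cocycleClass_surjective _ n z
  have hx : P.complex.d (n+1) n ≫ x.1 = 0 := x.2
  rw [homologyMap_cocycleClass (yonedaMap φ.hom Y) n x ⟨φ.hom.f n ≫ x.1, ?_⟩ rfl, homologyEquivExt_apply, homologyEquivExt_apply]
  · exact (ProjectiveResolution.mk₀_comp_extMk x.1 (n+1) rfl hx φ).symm
  · exact (φ.hom.comm_assoc _ _ _).symm.trans ((congrArg (_ ≫ ·) hx).trans comp_zero)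

/-- The linear comparison between `_root_.Ext`, the left derived functor of `Hom(-, Y)` which
enters the definition of `localCohomology`, and `Abelian.Ext`, the morphisms in the derived
category, for which long exact sequences are available. -/
def extEquiv (X Y : ModuleCat.{0} R) (n : ℕ) :
   ((_root_.Ext R (ModuleCat R) n).obj (Opposite.op X)).obj Y ≃ₗ[R] Abelian.Ext.{0} X Y n :=
  ((projectiveResolution X).isoExt n Y).toLinearEquiv ≪≫ₗ homologyEquivExt _ Y n

/-- The comparison `extEquiv` is natural in the first variable. -/
lemma extEquiv_nat {X X' : ModuleCat.{0} R} (g : X' ⟶ X) (Y : ModuleCat.{0} R) (n : ℕ) (z) :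
    extEquiv X' Y n (((_root_.Ext R (ModuleCat R) n).map g.op).app Y z) =
    (Ext.mk₀ g).comp (extEquiv X Y n z) (zero_add n) := by
  let φ : ProjectiveResolution.Hom (projectiveResolution X') (projectiveResolution X) g :=
    { hom := ProjectiveResolution.lift g _ _
      hom_f_zero_comp_π_f_zero := by
        rw [ChainComplex.single₀_map_f_zero]
        exact ProjectiveResolution.lift_commutes_zero _ _ _ }
  have := isoExt_nat φ Y n
  have h2 := congrArg (fun f => f z) (congrArg ModuleCat.Hom.hom this)
  have h3 := homologyEquivExt_nat Y n φ (((projectiveResolution X).isoExt n Y).hom z)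
  exact (congrArg (homologyEquivExt (projectiveResolution X') Y n) h2).trans h3

end

noncomputable section

open CategoryTheory Limits Abelian

variable {R : Type} [CommRing R]

/-! ### Local cohomology as a direct limit of Ext modules -/

/-- The projection `R ⧸ I ⟶ R ⧸ J` for `I ≤ J`, as a morphism of modules. -/
def quotHom {I J : Ideal R} (h : I ≤ J) : ModuleCat.of R (R ⧸ I) ⟶ ModuleCat.of R (R ⧸ J) :=
  ModuleCat.ofHom (Submodule.mapQ _ _ LinearMap.id h)

lemma quotHom_comp {I J K : Ideal R} (h : I ≤ J) (h' : J ≤ K) : quotHom h ≫ quotHom h' = quotHom (h.trans h') := by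
  ext
  rfl

lemma quotHom_refl {I : Ideal R} (h : I ≤ I) : quotHom h = 𝟙 _ := by
  ext
  rfl

/-- The transition map `Ext^i(R ⧸ I ^ s, N) → Ext^i(R ⧸ I ^ t, N)` for `s ≤ t`. -/
abbrev extTrans (I : Ideal R) (i : ℕ) (N : ModuleCat.{0} R) (s t : ℕ) (h : s ≤ t) :
   Abelian.Ext.{0} (ModuleCat.of R (R ⧸ I ^ s)) N i →ₗ[R] Abelian.Ext.{0} (ModuleCat.of R (R ⧸ I ^ t)) N i :=
  (Ext.mk₀ (quotHom (Ideal.pow_le_pow_right h))).precompOfLinear R N (zero_add i)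

lemma precomp_precomp {A B C N : ModuleCat.{0} R} (f : A ⟶ B) (g : B ⟶ C) {i : ℕ} (x : Abelian.Ext.{0} C N i) :
   (Ext.mk₀ f).comp ((Ext.mk₀ g).comp x (zero_add i)) (zero_add i) = (Ext.mk₀ (f ≫ g)).comp x (zero_add i) := by
  simp

instance (I : Ideal R) (i : ℕ) (N : ModuleCat.{0} R) : DirectedSystem
   (fun s => Abelian.Ext.{0} (ModuleCat.of R (R ⧸ I ^ s)) N i) (fun s t h => extTrans I i N s t h) where
  map_self s x := by
    refine (congrArg (fun f => (Ext.mk₀ f).comp x (zero_add i)) (quotHom_refl _)).trans ?_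
    simp
  map_map u t s h h' x :=
    (precomp_precomp _ _ x).trans (congrArg (fun f => (Ext.mk₀ f).comp x (zero_add i)) (quotHom_comp _ _))

/-- The `i`-th local cohomology of `N` with support in `I`, as the module-theoretic direct limit
of `Ext^i(R ⧸ I ^ s, N)`. Its agreement with `localCohomology` is `localCohomologyEquiv`. -/
def LC (I : Ideal R) (i : ℕ) (N : ModuleCat.{0} R) : Type :=
  Module.DirectLimit (fun s => Abelian.Ext.{0} (ModuleCat.of R (R ⧸ I ^ s)) N i) (extTrans I i N)

instance (I : Ideal R) (i : ℕ) (N : ModuleCat.{0} R) : AddCommGroup (LC I i N) :=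
  inferInstanceAs (AddCommGroup (Module.DirectLimit _ (extTrans I i N)))

instance (I : Ideal R) (i : ℕ) (N : ModuleCat.{0} R) : Module R (LC I i N) :=
  inferInstanceAs (Module R (Module.DirectLimit _ (extTrans I i N)))

/-- The canonical map from the `s`-th term of the direct system. -/
def LC.of (I : Ideal R) (i : ℕ) (N : ModuleCat.{0} R) (s : ℕ) :
   Abelian.Ext.{0} (ModuleCat.of R (R ⧸ I ^ s)) N i →ₗ[R] LC I i N :=
  Module.DirectLimit.of R ℕ _ (extTrans I i N) s

/-- The colimit cocone defining `localCohomology I i`, a colimit of functors, evaluated at `N`. -/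
def evalCocone (I : Ideal R) (i : ℕ) (N : ModuleCat.{0} R) :=
   ((evaluation _ _).obj N).mapCocone (colimit.cocone (localCohomology.diagram (localCohomology.idealPowersDiagram I) i))

/-- The evaluated cocone is a colimit, since evaluation preserves colimits. -/
def evalIsColimit (I : Ideal R) (i : ℕ) (N : ModuleCat.{0} R) : IsColimit (evalCocone I i N) :=
   isColimitOfPreserves _ (colimit.isColimit _)

/-- The value at `(X, Y)` of the left derived functor of `Hom(-, Y)`. -/
abbrev OldExt (X Y : ModuleCat.{0} R) (i : ℕ) : ModuleCat.{0} R := ((_root_.Ext R (ModuleCat R) i).obj (Opposite.op X)).obj Y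

/-- The structure map `Ext^i(R ⧸ I ^ s, N) → H^i_I(N)` of the colimit defining `localCohomology`. -/
def coconeMap (I : Ideal R) (i : ℕ) (N : ModuleCat.{0} R) (s : ℕ) :
    OldExt (ModuleCat.of R (R ⧸ I ^ s)) N i →ₗ[R] (localCohomology I i).obj N :=
  ((evalCocone I i N).ι.app (Opposite.op (Opposite.op s))).hom

lemma coconeMap_w (I : Ideal R) (i : ℕ) (N : ModuleCat.{0} R) (s t : ℕ) (h : s ≤ t)
   (x : OldExt (ModuleCat.of R (R ⧸ I ^ s)) N i) :
   coconeMap I i N t (((_root_.Ext R (ModuleCat R) i).map (quotHom (Ideal.pow_le_pow_right h)).op).app N x) =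
   coconeMap I i N s x := by
  have := (evalCocone I i N).w (homOfLE h).op.op
  exact congrArg (fun f => f x) (congrArg ModuleCat.Hom.hom this)

lemma coconeMap_surjective (I : Ideal R) (i : ℕ) (N : ModuleCat.{0} R) (y : (localCohomology I i).obj N) :
   ∃ s x, coconeMap I i N s x = y := by
  obtain ⟨s, x, h⟩ := Concrete.isColimit_exists_rep _ (evalIsColimit I i N) y
  exact ⟨s.unop.unop, x, h⟩

lemma coconeMap_eq_zero (I : Ideal R) (i : ℕ) (N : ModuleCat.{0} R) (s : ℕ)
   (x : OldExt (ModuleCat.of R (R ⧸ I ^ s)) N i) (hx : coconeMap I i N s x = 0) : ∃ t, ∃ h : s ≤ t,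
    ((_root_.Ext R (ModuleCat R) i).map (quotHom (Ideal.pow_le_pow_right (I := I) h)).op).app N x = 0 := by
  obtain ⟨t, f, g, h⟩ := Concrete.isColimit_exists_of_rep_eq (i := Opposite.op (Opposite.op s)) (j := Opposite.op (Opposite.op s))
     _ (evalIsColimit I i N) x
     (0 : OldExt (ModuleCat.of R (R ⧸ I ^ s)) N i) (hx.trans (map_zero (coconeMap I i N s)).symm)
  refine ⟨t.unop.unop, leOfHom f.unop.unop, ?_⟩
  refine Eq.trans ?_ (h.trans ?_)
  · rfl
  · exact map_zero (ModuleCat.Hom.hom (((_root_.Ext R (ModuleCat R) i).map (quotHom (Ideal.pow_le_pow_right (I := I)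
       (leOfHom g.unop.unop))).op).app N))

/-- The comparison map induced by `coconeMap` and the inverse of `extEquiv`. -/
def toLocalCohomology (I : Ideal R) (i : ℕ) (N : ModuleCat.{0} R) : LC I i N →ₗ[R] (localCohomology I i).obj N :=
  Module.DirectLimit.lift _ _ _ _ (fun s => coconeMap I i N s ∘ₗ (extEquiv _ N i).symm.toLinearMap) (by
    intro s t h x
    obtain ⟨x, rfl⟩ := (extEquiv _ N i).surjective x
    have := (extEquiv_nat (quotHom (Ideal.pow_le_pow_right (I := I) h)) N i x)
    refine (congrArg (fun z => coconeMap I i N t ((extEquiv _ N i).symm z)) this.symm).trans ?_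
    simp only [LinearMap.coe_comp, LinearEquiv.coe_coe, Function.comp_apply, LinearEquiv.symm_apply_apply]
    exact coconeMap_w I i N s t h x)

lemma toLocalCohomology_of (I : Ideal R) (i : ℕ) (N : ModuleCat.{0} R) (s : ℕ) (x) :
   toLocalCohomology I i N (LC.of I i N s (extEquiv _ N i x)) = coconeMap I i N s x := by
  refine (Module.DirectLimit.lift_of _ _ _).trans ?_
  simp

lemma toLocalCohomology_bijective (I : Ideal R) (i : ℕ) (N : ModuleCat.{0} R) :
    Function.Bijective (toLocalCohomology I i N) := by
  constructor
  · rw [injective_iff_map_eq_zero]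
    intro z hz
    obtain ⟨s, x, rfl⟩ := Module.DirectLimit.exists_of z
    obtain ⟨x, rfl⟩ := (extEquiv _ N i).surjective x
    obtain ⟨t, hst, h⟩ := coconeMap_eq_zero I i N s x ((toLocalCohomology_of I i N s x).symm.trans hz)
    have h2 : (extTrans I i N s t hst (extEquiv _ N i x)) = 0 :=
      (extEquiv_nat _ _ _ _).symm.trans ((congrArg (extEquiv _ N i) h).trans (map_zero _))
    exact (Module.DirectLimit.of_f (hij := hst)).symm.trans ((congrArg _ h2).trans (map_zero _))
  · intro y
    obtain ⟨s, x, rfl⟩ := coconeMap_surjective I i N y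
    exact ⟨_, toLocalCohomology_of I i N s x⟩

/-- Mathlib's local cohomology, a colimit in a functor category of derived functors, is the direct
limit `LC`. -/
def localCohomologyEquiv (I : Ideal R) (i : ℕ) (N : ModuleCat.{0} R) : (localCohomology I i).obj N ≃ₗ[R] LC I i N :=
  (LinearEquiv.ofBijective _ (toLocalCohomology_bijective I i N)).symm

/-! ### Long exact sequences, torsion and change of support -/

namespace LC

variable {I I' : Ideal R} {N N' N'' : ModuleCat.{0} R}

lemma exists_of {i : ℕ} (z : LC I i N) : ∃ s x, LC.of I i N s x = z := Module.DirectLimit.exists_of z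

lemma of_trans {i : ℕ} {s t : ℕ} (h : s ≤ t) (x) :
   LC.of I i N t ((Ext.mk₀ (quotHom (Ideal.pow_le_pow_right h))).comp x (zero_add i)) = LC.of I i N s x :=
  Module.DirectLimit.of_f (hij := h)

lemma exists_of_eq_zero {i : ℕ} {s : ℕ} {x} (h : LC.of I i N s x = 0) : ∃ t, ∃ h : s ≤ t,
   (Ext.mk₀ (quotHom (Ideal.pow_le_pow_right (I := I) h))).comp x (zero_add i) = 0 :=
  Module.DirectLimit.of.zero_exact h

/-- The map `H^i_I(N) → H^{i+j}_I(N')` given by Yoneda composition with `β ∈ Ext^j(N, N')`. For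
`j = 0` it is functoriality in `N`; for the class of an extension it is the connecting map. -/
def postcomp (I : Ideal R) {i j k : ℕ} (β : Abelian.Ext.{0} N N' j) (h : i + j = k) : LC I i N →ₗ[R] LC I k N' :=
  Module.DirectLimit.lift _ _ _ _ (fun s => LC.of I k N' s ∘ₗ β.postcompOfLinear R _ h) (by
    intro s t hst x
    refine Eq.trans ?_ (of_trans hst _)
    exact congrArg (LC.of I k N' t) (Ext.comp_assoc _ _ _ (zero_add i) h (by lia)))

lemma postcomp_of {i j k : ℕ} (β : Abelian.Ext.{0} N N' j) (h : i + j = k) (s) (x) :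
   postcomp I β h (LC.of I i N s x) = LC.of I k N' s (x.comp β h) :=
  Module.DirectLimit.lift_of _ _ _

lemma postcomp_postcomp {i j k j' k' l : ℕ} (β : Abelian.Ext.{0} N N' j) (h : i + j = k)
    (β' : Abelian.Ext.{0} N' N'' j') (h' : k + j' = k') (hl : j + j' = l) (z) :
    postcomp I β' h' (postcomp I β h z) = postcomp I (β.comp β' hl) (by lia : i + l = k') z := by
  obtain ⟨s, x, rfl⟩ := exists_of z
  rw [postcomp_of, postcomp_of, postcomp_of, Ext.comp_assoc _ _ _ _ _ (by lia)]

lemma postcomp_zero {i j k : ℕ} (h : i + j = k) (z) :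
    postcomp I (0 : Abelian.Ext.{0} N N' j) h z = 0 := by
  obtain ⟨s, x, rfl⟩ := exists_of z
  rw [postcomp_of, Ext.comp_zero, map_zero]

/-- The functorial map induced by multiplication by `r` on `N` is multiplication by `r`. -/
lemma postcomp_smul_id {i : ℕ} (r : R) (z : LC I i N) :
   postcomp I (Ext.mk₀ (r • 𝟙 N)) (add_zero i) z = r • z := by
  obtain ⟨s, x, rfl⟩ := exists_of z
  rw [postcomp_of, ← map_smul, Ext.smul_eq_comp_mk₀]

section exact
variable {S : ShortComplex (ModuleCat.{0} R)} (hS : S.ShortExact)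
include hS

/-- Exactness of the long exact sequence of local cohomology at the first module. As in `exact₂`
and `exact₃`, a class killed in the limit is killed at a finite stage, where the `Ext` sequence
applies. -/
lemma exact₁ {i j : ℕ} (h : i + 1 = j) (z : LC I j S.X₁) (hz : postcomp I (Ext.mk₀ S.f) (add_zero j) z = 0) :
   ∃ w : LC I i S.X₃, postcomp I hS.extClass h w = z := by
  obtain ⟨s, x, rfl⟩ := exists_of z
  rw [postcomp_of] at hz
  obtain ⟨t, hst, ht⟩ := exists_of_eq_zero hz
  rw [← Ext.comp_assoc _ _ _ (zero_add j) _ (by lia)] at ht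
  obtain ⟨y, hy⟩ := Ext.covariant_sequence_exact₁ _ hS _ ht h
  exact ⟨LC.of _ _ _ t y, by rw [postcomp_of, hy, of_trans hst]⟩

lemma exact₂ {i : ℕ} (z : LC I i S.X₂) (hz : postcomp I (Ext.mk₀ S.g) (add_zero i) z = 0) :
   ∃ w : LC I i S.X₁, postcomp I (Ext.mk₀ S.f) (add_zero i) w = z := by
  obtain ⟨s, x, rfl⟩ := exists_of z
  rw [postcomp_of] at hz
  obtain ⟨t, hst, ht⟩ := exists_of_eq_zero hz
  rw [← Ext.comp_assoc _ _ _ (zero_add i) _ (by lia)] at ht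
  obtain ⟨y, hy⟩ := Ext.covariant_sequence_exact₂ _ hS _ ht
  exact ⟨LC.of _ _ _ t y, by rw [postcomp_of, hy, of_trans hst]⟩

lemma exact₃ {i j : ℕ} (h : i + 1 = j) (z : LC I i S.X₃) (hz : postcomp I hS.extClass h z = 0) :
   ∃ w : LC I i S.X₂, postcomp I (Ext.mk₀ S.g) (add_zero i) w = z := by
  obtain ⟨s, x, rfl⟩ := exists_of z
  rw [postcomp_of] at hz
  obtain ⟨t, hst, ht⟩ := exists_of_eq_zero hz
  rw [← Ext.comp_assoc _ _ _ (zero_add i) _ (by lia)] at ht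
  obtain ⟨y, hy⟩ := Ext.covariant_sequence_exact₃ _ hS _ h ht
  exact ⟨LC.of _ _ _ t y, by rw [postcomp_of, hy, of_trans hst]⟩

end exact

lemma postcomp_mono_injective (f : N ⟶ N') [Mono f] : Function.Injective (postcomp I (Ext.mk₀ f) (add_zero 0)) := by
  rw [injective_iff_map_eq_zero]
  intro z hz
  obtain ⟨s, x, rfl⟩ := exists_of z
  rw [postcomp_of] at hz
  obtain ⟨t, hst, ht⟩ := exists_of_eq_zero hz
  rw [← Ext.comp_assoc _ _ _ (zero_add 0) _ (by lia)] at ht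
  rw [← of_trans hst, Ext.postcomp_mk₀_injective_of_mono _ f (ht.trans (map_zero ((Ext.mk₀ f).postcomp _ _)).symm), map_zero]

/-- Local cohomology is `I`-power torsion: `r ^ s` kills `R ⧸ I ^ s`, hence every
`Ext^i(R ⧸ I ^ s, N)`. -/
lemma exists_pow_smul_eq_zero {i : ℕ} {r : R} (hr : r ∈ I) (z : LC I i N) : ∃ m, r ^ m • z = 0 := by
  obtain ⟨s, x, rfl⟩ := exists_of z
  refine ⟨s, ?_⟩
  have h : r ^ s • (𝟙 (ModuleCat.of R (R ⧸ I ^ s))) = 0 := by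
    ext
    change r ^ s • (Submodule.Quotient.mk 1 : R ⧸ I ^ s) = 0
    rw [← Submodule.Quotient.mk_smul, Submodule.Quotient.mk_eq_zero, smul_eq_mul, mul_one]
    exact Ideal.pow_mem_pow hr s
  rw [← map_smul]
  have h2 : r ^ s • x = (Ext.mk₀ (r ^ s • (𝟙 (ModuleCat.of R (R ⧸ I ^ s))))).comp x (zero_add i) := by
    rw [Ext.mk₀_smul, Ext.smul_comp, Ext.mk₀_id_comp]
  rw [h2, h, Ext.mk₀_zero, Ext.zero_comp, map_zero]

/-- The change-of-support map `H^i_{I'}(N) → H^i_I(N)` for `I ≤ I'`, induced by the projections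
`R ⧸ I ^ s ⟶ R ⧸ I' ^ s`. -/
def change (h : I ≤ I') (i : ℕ) (N : ModuleCat.{0} R) : LC I' i N →ₗ[R] LC I i N :=
  Module.DirectLimit.lift _ _ _ _ (fun s => LC.of I i N s ∘ₗ (Ext.mk₀ (quotHom (Ideal.pow_right_mono h s))).precompOfLinear R N (zero_add i)) (by
    intro s t hst x
    refine Eq.trans ?_ (of_trans hst _)
    have e : (Ext.mk₀ (quotHom (Ideal.pow_right_mono h t))).comp
        ((Ext.mk₀ (quotHom (Ideal.pow_le_pow_right hst))).comp x (zero_add i)) (zero_add i) =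
        (Ext.mk₀ (quotHom (Ideal.pow_le_pow_right hst))).comp
        ((Ext.mk₀ (quotHom (Ideal.pow_right_mono h s))).comp x (zero_add i)) (zero_add i) := by
      rw [precomp_precomp, precomp_precomp, quotHom_comp, quotHom_comp]
    exact congrArg (LC.of I i N t) e)

lemma change_of (h : I ≤ I') {i : ℕ} (s x) : change h i N (LC.of I' i N s x) =
    LC.of I i N s ((Ext.mk₀ (quotHom (Ideal.pow_right_mono h s))).comp x (zero_add i)) :=
  Module.DirectLimit.lift_of _ _ _

lemma change_postcomp (hI : I ≤ I') {i j k : ℕ} (β : Abelian.Ext.{0} N N' j) (h : i + j = k) (z) :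
   change hI k N' (postcomp I' β h z) = postcomp I β h (change hI i N z) := by
  obtain ⟨s, x, rfl⟩ := exists_of z
  rw [postcomp_of, change_of, change_of, postcomp_of, Ext.comp_assoc _ _ _ _ _ (by lia)]

lemma exists_of_change_eq_zero {hI : I ≤ I'} {i : ℕ} {s x} (h : change hI i N (LC.of I' i N s x) = 0) :
   ∃ t, ∃ h : s ≤ t, (Ext.mk₀ (quotHom ((Ideal.pow_le_pow_right h).trans (Ideal.pow_right_mono hI s)))).comp x (zero_add i) = 0 := by
  rw [change_of] at h
  obtain ⟨t, hst, ht⟩ := exists_of_eq_zero h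
  refine ⟨t, hst, ?_⟩
  rw [precomp_precomp, quotHom_comp] at ht
  exact ht

instance {I J : Ideal R} (h : I ≤ J) : Epi (quotHom h) := by
  rw [ModuleCat.epi_iff_surjective]
  intro x
  obtain ⟨x, rfl⟩ := Submodule.Quotient.mk_surjective _ x
  exact ⟨Submodule.Quotient.mk x, rfl⟩

lemma change_zero_injective (hI : I ≤ I') : Function.Injective (change hI 0 N) := by
  rw [injective_iff_map_eq_zero]
  intro z hz
  obtain ⟨s, x, rfl⟩ := exists_of z
  obtain ⟨t, hst, ht⟩ := exists_of_change_eq_zero hz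
  obtain ⟨f, rfl⟩ := (Ext.mk₀_bijective _ _).2 x
  rw [Ext.mk₀_comp_mk₀, Ext.mk₀_eq_zero_iff] at ht
  rw [zero_of_epi_comp _ ht, Ext.mk₀_zero, map_zero]

/-- The map `R ⧸ I ⟶ N` sending `1` to an element `n` killed by `I`. -/
def elemHom (I : Ideal R) (N : ModuleCat.{0} R) (n : N) (h : ∀ r ∈ I, r • n = 0) : ModuleCat.of R (R ⧸ I) ⟶ N :=
  ModuleCat.ofHom (Submodule.liftQ _ (LinearMap.toSpanSingleton R N n) h)

lemma elemHom_one (I : Ideal R) (N : ModuleCat.{0} R) (n : N) (h : ∀ r ∈ I, r • n = 0) :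
   elemHom I N n h (Submodule.Quotient.mk 1) = n := one_smul R n

lemma quot_hom_ext {I : Ideal R} {f g : ModuleCat.of R (R ⧸ I) ⟶ N}
    (h : f (Submodule.Quotient.mk 1) = g (Submodule.Quotient.mk 1)) : f = g := by
  ext
  exact h

lemma smul_quot_one {I : Ideal R} {r : R} (hr : r ∈ I) : r • (Submodule.Quotient.mk 1 : R ⧸ I) = 0 := by
  rw [← Submodule.Quotient.mk_smul, Submodule.Quotient.mk_eq_zero, smul_eq_mul, mul_one]
  exact hr

/-- If `I'` kills `N`, any map `R ⧸ I ^ s ⟶ N`, being determined by the image of `1`, factors over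
`R ⧸ I' ^ (s + 1)`; the exponent `s + 1` is positive even if `s = 0`. -/
lemma change_zero_surjective (hI : I ≤ I') (hN : ∀ r ∈ I', ∀ n : N, r • n = 0) : Function.Surjective (change hI 0 N) := by
  intro z
  obtain ⟨s, x, rfl⟩ := exists_of z
  obtain ⟨f, rfl⟩ := (Ext.mk₀_bijective _ _).2 x
  have hs : s ≤ s + 1 := by lia
  have hk : ∀ r ∈ I' ^ (s + 1), r • f (Submodule.Quotient.mk 1) = 0 :=
     fun r hr => hN r (Ideal.pow_le_self (by simp) hr) _
  refine ⟨LC.of _ _ _ (s + 1) (Ext.mk₀ (elemHom (I' ^ (s + 1)) N (f (Submodule.Quotient.mk 1)) hk)), ?_⟩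
  rw [change_of, ← of_trans hs, Ext.mk₀_comp_mk₀, Ext.mk₀_comp_mk₀]
  congr 2
  apply quot_hom_ext
  exact elemHom_one _ _ _ hk

/-- If `I'` kills `N`, change of support is injective in degree `1`. Embed `N` in an injective `E` with
cokernel `Q`; a class in `Ext^1(R ⧸ I' ^ s, N)` is represented by a map `c` to `Q`, and its vanishing
in the limit over powers of `I` means that `c` lifts to `E` over some `R ⧸ I ^ t`. The image `e` of
`1` in `E` is killed by `I' ^ (s + 1)`, because `I' ^ s` sends `e` into `N`. So `c` already lifts
over `R ⧸ I' ^ (s + 1)`. -/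
lemma change_one_injective (hI : I ≤ I') (hN : ∀ r ∈ I', ∀ n : N, r • n = 0) : Function.Injective (change hI 1 N) := by
  rw [injective_iff_map_eq_zero]
  intro z hz
  obtain ⟨s, x, rfl⟩ := exists_of z
  obtain ⟨t, hst, ht⟩ := exists_of_change_eq_zero hz
  let S : ShortComplex (ModuleCat.{0} R) := ShortComplex.mk (Injective.ι N) (cokernel.π (Injective.ι N)) (by simp)
  have hS : S.ShortExact :=
    { exact := ShortComplex.exact_cokernel _
      mono_f := inferInstanceAs (Mono (Injective.ι N))
      epi_g := inferInstanceAs (Epi (cokernel.π (Injective.ι N))) }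
  have hinj : Injective S.X₂ := inferInstanceAs (Injective (Injective.under N))
  obtain ⟨c, rfl⟩ := Ext.covariant_sequence_exact₁ _ hS x (Ext.eq_zero_of_injective _) (zero_add 1)
  obtain ⟨c, rfl⟩ := (Ext.mk₀_bijective _ _).2 c
  rw [Ext.mk₀_comp_mk₀_assoc] at ht
  obtain ⟨e, he⟩ := Ext.covariant_sequence_exact₃ _ hS _ (zero_add 1) ht
  obtain ⟨e, rfl⟩ := (Ext.mk₀_bijective _ _).2 e
  rw [Ext.mk₀_comp_mk₀] at he
  have he := (Ext.mk₀_bijective _ _).1 he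
  have he1 : S.g (e (Submodule.Quotient.mk 1)) = c (Submodule.Quotient.mk 1) :=
    congrArg (fun f => f.hom (Submodule.Quotient.mk 1)) he
  have hker : ∀ r ∈ I' ^ (s + 1), r • e (Submodule.Quotient.mk 1) = 0 := by
    intro r hr
    rw [pow_succ'] at hr
    refine Submodule.smul_induction_on hr (fun a ha b hb => ?_) (fun a b ha hb => by rw [add_smul, ha, hb, add_zero])
    have h1 : S.g (b • e (Submodule.Quotient.mk 1)) = 0 := by
      rw [map_smul, he1, ← map_smul, smul_quot_one hb, map_zero]
    obtain ⟨n, hn⟩ := (ShortComplex.moduleCat_exact_iff _).1 hS.exact _ h1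
    rw [smul_assoc, ← hn, ← map_smul, hN a ha, map_zero]
  have hs : s ≤ s + 1 := by lia
  rw [← of_trans hs, Ext.mk₀_comp_mk₀_assoc]
  have : quotHom (Ideal.pow_le_pow_right hs) ≫ c = elemHom _ S.X₂ _ hker ≫ S.g := by
    apply quot_hom_ext
    refine he1.symm.trans ?_
    exact congrArg S.g (elemHom_one _ _ _ hker).symm
  rw [this, ← Ext.mk₀_comp_mk₀_assoc, hS.comp_extClass, Ext.comp_zero, map_zero]

end LC

open RingTheory.Sequence Pointwise

/-! ### Regular sequences -/

namespace LC

lemma postcomp_comp_zero {I : Ideal R} {i : ℕ} {N N' N'' : ModuleCat.{0} R} {f : N ⟶ N'} {g : N' ⟶ N''} (h : f ≫ g = 0)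
    (z : LC I i N) : postcomp I (Ext.mk₀ g) (add_zero i) (postcomp I (Ext.mk₀ f) (add_zero i) z) = 0 := by
  rw [postcomp_postcomp _ _ _ _ (add_zero 0), Ext.mk₀_comp_mk₀, h, Ext.mk₀_zero, postcomp_zero]

section connecting
variable (I : Ideal R) {M : Type} [AddCommGroup M] [Module R M] {x : R}

/-- The map `H^i_I(M) → H^i_I(M ⧸ xM)` induced by the projection. -/
def toQuot (x : R) (M : Type) [AddCommGroup M] [Module R M] (i : ℕ) :
   LC I i (ModuleCat.of R M) →ₗ[R] LC I i (ModuleCat.of R (QuotSMulTop x M)) :=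
  postcomp I (Ext.mk₀ ((ModuleCat.of R M).smulShortComplex x).g) (add_zero i)

/-- The connecting map `H^i_I(M ⧸ xM) → H^{i+1}_I(M)` of `0 → M → M → M ⧸ xM → 0`, for `x` regular
on `M`. -/
def δ (hx : IsSMulRegular M x) (i : ℕ) :
   LC I i (ModuleCat.of R (QuotSMulTop x M)) →ₗ[R] LC I (i + 1) (ModuleCat.of R M) :=
  postcomp I (hx.smulShortComplex_shortExact (M := ModuleCat.of R M)).extClass rfl

variable {I}

lemma exists_δ_eq (hx : IsSMulRegular M x) {i : ℕ} {z : LC I (i + 1) (ModuleCat.of R M)} (hz : x • z = 0) :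
   ∃ w, δ I hx i w = z :=
  exact₁ (hx.smulShortComplex_shortExact (M := ModuleCat.of R M)) rfl z ((postcomp_smul_id x z).trans hz)

lemma exists_smul_eq (hx : IsSMulRegular M x) {i : ℕ} {z : LC I i (ModuleCat.of R M)} (hz : toQuot I x M i z = 0) :
   ∃ w, x • w = z := by
  obtain ⟨w, hw⟩ := exact₂ (hx.smulShortComplex_shortExact (M := ModuleCat.of R M)) z hz
  exact ⟨w, (postcomp_smul_id x w).symm.trans hw⟩

lemma exists_toQuot_eq (hx : IsSMulRegular M x) {i : ℕ} {z} (hz : δ I hx i z = 0) :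
   ∃ w, toQuot I x M i w = z :=
  exact₃ (hx.smulShortComplex_shortExact (M := ModuleCat.of R M)) rfl z hz

/-- The image of the connecting map is killed by `x`, as `H^{i+1}_I(M) → H^{i+1}_I(M)` is
multiplication by `x`. -/
lemma smul_δ (hx : IsSMulRegular M x) {i : ℕ} (z) : x • δ I hx i z = 0 := by
  refine (postcomp_smul_id x _).symm.trans ?_
  refine (postcomp_postcomp _ _ _ _ (add_zero 1) z).trans ?_
  refine Eq.trans (congrArg (fun β => postcomp I β rfl z)
    (hx.smulShortComplex_shortExact (M := ModuleCat.of R M)).extClass_comp) (postcomp_zero _ z)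

lemma δ_toQuot (hx : IsSMulRegular M x) {i : ℕ} (z) : δ I hx i (toQuot I x M i z) = 0 := by
  refine (postcomp_postcomp _ _ _ _ (zero_add 1) z).trans ?_
  refine Eq.trans (congrArg (fun β => postcomp I β rfl z)
    (hx.smulShortComplex_shortExact (M := ModuleCat.of R M)).comp_extClass) (postcomp_zero _ z)

lemma toQuot_smul {i : ℕ} (z : LC I i (ModuleCat.of R M)) : toQuot I x M i (x • z) = 0 :=
  (congrArg (toQuot I x M i) (postcomp_smul_id x z).symm).trans
    (postcomp_comp_zero ((ModuleCat.of R M).smulShortComplex x).zero z)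

lemma eq_zero_of_smul_zero (hx : IsSMulRegular M x) {z : LC I 0 (ModuleCat.of R M)} (hz : x • z = 0) : z = 0 := by
  have := (hx.smulShortComplex_shortExact (M := ModuleCat.of R M)).mono_f
  exact postcomp_mono_injective ((ModuleCat.of R M).smulShortComplex x).f
    ((postcomp_smul_id x z).trans (hz.trans (map_zero _).symm))

lemma δ_injective (hx : IsSMulRegular M x) {i : ℕ} (h : Subsingleton (LC I i (ModuleCat.of R M))) :
    Function.Injective (δ I hx i) := by
  rw [injective_iff_map_eq_zero]
  intro z hz
  obtain ⟨w, rfl⟩ := exists_toQuot_eq hx hz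
  rw [Subsingleton.elim w 0, map_zero]

variable {I' : Ideal R} (hI : I ≤ I')

lemma change_δ (hx : IsSMulRegular M x) {i : ℕ} (z) :
   change hI (i + 1) _ (δ I' hx i z) = δ I hx i (change hI i _ z) := change_postcomp ..

lemma change_toQuot {i : ℕ} (z) :
   change hI i _ (toQuot I' x M i z) = toQuot I x M i (change hI i _ z) := change_postcomp ..

end connecting

lemma postcomp_retract {I : Ideal R} {i : ℕ} {N N' : ModuleCat.{0} R} {f : N ⟶ N'} {g : N' ⟶ N} (h : f ≫ g = 𝟙 N) (z : LC I i N) :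
    postcomp I (Ext.mk₀ g) (add_zero i) (postcomp I (Ext.mk₀ f) (add_zero i) z) = z := by
  rw [postcomp_postcomp _ _ _ _ (add_zero 0), Ext.mk₀_comp_mk₀, h, ← one_smul R (𝟙 _)]
  exact (postcomp_smul_id 1 z).trans (one_smul R z)

/-- The isomorphism on local cohomology induced by an isomorphism of modules. -/
def mapEquiv (I : Ideal R) (i : ℕ) {M M' : Type} [AddCommGroup M] [Module R M] [AddCommGroup M'] [Module R M'] (e : M ≃ₗ[R] M') :
    LC I i (ModuleCat.of R M) ≃ₗ[R] LC I i (ModuleCat.of R M') :=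
  { postcomp I (Ext.mk₀ e.toModuleIso.hom) (add_zero i) with
    invFun := postcomp I (Ext.mk₀ e.toModuleIso.inv) (add_zero i)
    left_inv := postcomp_retract e.toModuleIso.hom_inv_id
    right_inv := postcomp_retract e.toModuleIso.inv_hom_id }

/-- If `x ∈ I` acts injectively on local cohomology with support in `I`, this vanishes by torsion. -/
lemma eq_zero_of_smul_injective {I : Ideal R} {x : R} (hx : x ∈ I) {i : ℕ} {N : ModuleCat.{0} R}
   (h : ∀ z : LC I i N, x • z = 0 → z = 0) (z : LC I i N) : z = 0 := by
  obtain ⟨m, hm⟩ := exists_pow_smul_eq_zero hx z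
  induction m with
  | zero => simpa using hm
  | succ m ih => exact ih (h _ (by rw [smul_smul, ← pow_succ', hm]))

/-- Local cohomology vanishes below the length of a weakly regular sequence contained in the ideal. -/
lemma vanishing {I : Ideal R} (rs : List R) (hrs : ∀ r ∈ rs, r ∈ I) :
   ∀ (M : Type) [AddCommGroup M] [Module R M], IsWeaklyRegular M rs →
    ∀ j < rs.length, Subsingleton (LC I j (ModuleCat.of R M)) := by
  induction rs with
  | nil => intro M _ _ _ j hj; simp at hj
  | cons x rs ih =>
    intro M _ _ h j hj
    rw [isWeaklyRegular_cons_iff] at h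
    refine subsingleton_of_forall_eq 0 (eq_zero_of_smul_injective (hrs x (by simp)) fun z hz => ?_)
    rcases j with _ | j
    · exact eq_zero_of_smul_zero h.1 hz
    · obtain ⟨w, rfl⟩ := exists_δ_eq h.1 hz
      have := ih (fun r hr => hrs r (by simp [hr])) _ h.2 j (by simpa using hj)
      rw [Subsingleton.elim w 0, map_zero]

/-- The quotient by the ideal of the empty sequence is the module itself. -/
def quotNilEquiv (M : Type) [AddCommGroup M] [Module R M] :
    (M ⧸ (Ideal.ofList ([] : List R) • ⊤ : Submodule R M)) ≃ₗ[R] M :=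
  Submodule.quotEquivOfEqBot _ (by simp)

/-- If the image of `ψ` is the `rs`-torsion, and `d` is injective with image the `x`-torsion, then the
image of `d ∘ ψ` is the torsion of `x :: rs`. -/
lemma range_comp_iff {X N P : Type*} [AddCommGroup X] [AddCommGroup N] [AddCommGroup P]
    [Module R X] [Module R N] [Module R P] {rs : List R} {x : R} {ψ : X →ₗ[R] N} {d : N →ₗ[R] P}
    (hd : Function.Injective d) (hψ : ∀ w, (∃ u, ψ u = w) ↔ ∀ r ∈ rs, r • w = 0)
    (hx : ∀ y, (∃ w, d w = y) ↔ x • y = 0) (y : P) :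
    (∃ u, d (ψ u) = y) ↔ ∀ r ∈ x :: rs, r • y = 0 := by
  rw [List.forall_mem_cons]
  constructor
  · rintro ⟨u, rfl⟩
    refine ⟨(hx _).1 ⟨_, rfl⟩, fun r hr => ?_⟩
    rw [← map_smul, (hψ _).1 ⟨u, rfl⟩ r hr, map_zero]
  · rintro ⟨h1, h2⟩
    obtain ⟨w, rfl⟩ := (hx y).2 h1
    obtain ⟨u, rfl⟩ := (hψ w).2 fun r hr => hd (by rw [map_smul, h2 r hr, map_zero])
    exact ⟨u, rfl⟩

/-- Let `rs` be weakly regular on `M` and `k = n + rs.length`. If the local cohomology of `M` vanishes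
below degree `k`, the composite of the connecting maps embeds `H^n_I(M ⧸ (rs)M)` into `H^k_I(M)`
with image the elements killed by `rs`. -/
lemma exists_iso_torsion {I : Ideal R} (rs : List R) (n : ℕ) :
   ∀ (k : ℕ), k = n + rs.length → ∀ (M : Type) [AddCommGroup M] [Module R M],
    IsWeaklyRegular M rs → (∀ j < k, Subsingleton (LC I j (ModuleCat.of R M))) →
    ∃ ψ : LC I n (ModuleCat.of R (M ⧸ (Ideal.ofList rs • ⊤ : Submodule R M))) →ₗ[R]
        LC I k (ModuleCat.of R M),
      Function.Injective ψ ∧ ∀ y, (∃ u, ψ u = y) ↔ ∀ r ∈ rs, r • y = 0 := by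
  induction rs with
  | nil =>
    intro k hk M _ _ _ _
    obtain rfl : k = n := hk
    exact ⟨(mapEquiv I k (quotNilEquiv M)).toLinearMap, (mapEquiv I k (quotNilEquiv M)).injective,
      fun y => by simpa using (mapEquiv I k (quotNilEquiv M)).surjective y⟩
  | cons x rs ih =>
    intro k hk M _ _ h hv
    obtain ⟨k, rfl⟩ : ∃ k', k = k' + 1 := ⟨n + rs.length, hk⟩
    rw [isWeaklyRegular_cons_iff] at h
    obtain ⟨ψ, hψ, hψ'⟩ := ih k (by simpa [← add_assoc] using hk) _ h.2 (fun j hj => by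
      have h2 := hv (j + 1) (by lia)
      exact (δ_injective h.1 (hv j (by lia))).subsingleton)
    have hδ := δ_injective h.1 (hv k (by lia))
    let e := mapEquiv I n (Submodule.quotOfListConsSMulTopEquivQuotSMulTopInner M x rs)
    refine ⟨δ I h.1 k ∘ₗ ψ ∘ₗ e.toLinearMap, hδ.comp (hψ.comp e.injective), fun y => ?_⟩
    rw [← range_comp_iff hδ hψ' (fun y => ⟨?_, exists_δ_eq h.1⟩) y]
    · exact ⟨fun ⟨u, hu⟩ => ⟨e u, hu⟩, fun ⟨u, hu⟩ =>
        ⟨e.symm u, (congrArg (fun v => δ I h.1 k (ψ v)) (e.apply_symm_apply u)).trans hu⟩⟩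
    · rintro ⟨w, rfl⟩
      exact smul_δ h.1 _

/-- Let `rs` in `I ≤ I'` be weakly regular on `M`, such that `I'` kills `M ⧸ (rs)M`. Then the
change-of-support map `H^i_{I'}(M) → H^i_I(M)` is bijective for `i = rs.length` and injective for
`i = rs.length + 1`. The injectivity in the higher degree is what makes the induction on `rs`
close: it is needed for lifting along the connecting maps. -/
lemma change_bijective {I I' : Ideal R} (hI : I ≤ I') (rs : List R) (hrs : ∀ r ∈ rs, r ∈ I) :
   ∀ (M : Type) [AddCommGroup M] [Module R M], IsWeaklyRegular M rs →
    (∀ r ∈ I', ∀ m : (M ⧸ (Ideal.ofList rs • ⊤ : Submodule R M)), r • m = 0) →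
    Function.Bijective (change hI rs.length (ModuleCat.of R M)) ∧
    Function.Injective (change hI (rs.length + 1) (ModuleCat.of R M)) := by
  induction rs with
  | nil =>
    intro M _ _ _ hk
    have hk' : ∀ r ∈ I', ∀ m : M, r • m = 0 := fun r hr m => (quotNilEquiv (R := R) M).symm.injective (by
      rw [map_smul, hk r hr, map_zero])
    exact ⟨⟨change_zero_injective hI, change_zero_surjective hI hk'⟩, change_one_injective hI hk'⟩
  | cons x rs ih =>
    intro M _ _ h hk
    have hv := vanishing (x :: rs) hrs M h rs.length (by simp)
    have hv' := vanishing (x :: rs) (fun r hr => hI (hrs r hr)) M h rs.length (by simp)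
    rw [isWeaklyRegular_cons_iff] at h
    have hxI := hrs x (by simp)
    obtain ⟨⟨hinj, hsurj⟩, hinj'⟩ := ih (fun r hr => hrs r (by simp [hr])) _ h.2 (fun r hr m =>
      (Submodule.quotOfListConsSMulTopEquivQuotSMulTopInner M x rs).symm.injective (by
        rw [map_smul, hk r hr, map_zero]))
    -- The kernel of `change` is `x`-power torsion, so injectivity may be tested on `x`-torsion.
    have key : ∀ {i : ℕ} {N : ModuleCat.{0} R}, (∀ z, x • z = 0 → change hI i N z = 0 → z = 0) →
        Function.Injective (change hI i N) := by
      intro i N H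
      rw [injective_iff_map_eq_zero]
      intro z hz
      obtain ⟨m, hm⟩ := exists_pow_smul_eq_zero (hI hxI) z
      induction m generalizing z with
      | zero => simpa using hm
      | succ m ih =>
        refine H z (ih _ ?_ ?_) hz
        · rw [map_smul, hz, smul_zero]
        · rw [smul_smul, ← pow_succ, hm]
    have hinj1 : Function.Injective (change hI (rs.length + 1) (ModuleCat.of R M)) := by
      refine key fun z hz hz' => ?_
      obtain ⟨w, rfl⟩ := exists_δ_eq h.1 hz
      rw [change_δ] at hz'
      rw [hinj ((δ_injective h.1 hv (hz'.trans (map_zero _).symm)).trans (map_zero _).symm), map_zero]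
    have hsurj1 : Function.Surjective (change hI (rs.length + 1) (ModuleCat.of R M)) := by
      intro y
      -- Induct on the power of `x` killing `y`: lift `x • y`, divide the lift by `x`, and correct
      -- by an `x`-torsion element, which lies in the image of the connecting map.
      obtain ⟨m, hm⟩ := exists_pow_smul_eq_zero hxI y
      induction m generalizing y with
      | zero => exact ⟨0, by simpa using hm.symm⟩
      | succ m ih =>
        obtain ⟨z, hz⟩ := ih (x • y) (by rw [smul_smul, ← pow_succ, hm])
        have h1 : toQuot I' x M _ z = 0 := by
          apply hinj'
          rw [change_toQuot, hz, map_zero, toQuot_smul]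
        obtain ⟨z', rfl⟩ := exists_smul_eq h.1 h1
        obtain ⟨w, hw⟩ := exists_δ_eq h.1 (z := y - change hI _ _ z') (by rw [smul_sub, ← map_smul, hz, sub_self])
        obtain ⟨w', rfl⟩ := hsurj w
        refine ⟨z' + δ I' h.1 _ w', ?_⟩
        rw [map_add, change_δ, hw]
        abel
    refine ⟨⟨hinj1, hsurj1⟩, key fun z hz hz' => ?_⟩
    obtain ⟨w, rfl⟩ := exists_δ_eq h.1 hz
    rw [change_δ] at hz'
    obtain ⟨n, hn⟩ := exists_toQuot_eq h.1 hz'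
    obtain ⟨n', rfl⟩ := hsurj1 n
    rw [← hinj' ((change_toQuot hI n').trans hn)]
    exact δ_toQuot h.1 _
end LC

/-- A permutable regular sequence is regular in any enumeration of its index set, given as a list
without repetitions. -/
lemma isWeaklyRegular_map_of_nodup {c : ℕ} {f : Fin c → R}
    (hperm : ∀ σ : Equiv.Perm (Fin c), IsRegular R (List.ofFn (f ∘ σ)))
    {l : List (Fin c)} (hl : l.Nodup) (hmem : ∀ x, x ∈ l) : IsWeaklyRegular R (l.map f) := by
  have hlen : l.length = c := by
    have h := Fintype.card_congr (hl.getEquivOfForallMemList l hmem)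
    simpa using h
  have := hperm ((finCongr hlen.symm).trans (hl.getEquivOfForallMemList l hmem))
  convert this.toIsWeaklyRegular
  refine List.ext_getElem (by simp [hlen]) fun i h1 h2 => by simp

lemma ofList_map_toList {c : ℕ} (f : Fin c → R) (S : Finset (Fin c)) :
    Ideal.ofList (S.toList.map f) = Ideal.span (f '' (S : Set (Fin c))) := by
  rw [Ideal.ofList]
  congr 1
  ext; simp

end

/-! ### The annihilator of part of a permutable regular sequence -/

/-- Let `R` be Noetherian, `f 0, …, f (c-1)` a permutable regular
sequence, and `M = H^c_{(f)}(R)`.  For a subset `T ⊆ {0, …, c-1}` with complement `T̃`,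
the annihilator of the ideal `𝐟_{T̃}` in `M` is isomorphic as an `R`-module to
`H^{|T|}_{𝐟_T}(R/𝐟_{T̃})`. -/
theorem statement14 (R : Type) [CommRing R] [IsNoetherianRing R]
    (c : ℕ) (hc : 1 ≤ c) (f : Fin c → R)
    (hperm : ∀ σ : Equiv.Perm (Fin c),
      RingTheory.Sequence.IsRegular R (List.ofFn (f ∘ σ)))
    (T : Finset (Fin c)) :
    Nonempty (
      ↥(Submodule.torsionBySet R
          ↥((localCohomology (Ideal.span (Set.range f)) c).obj (ModuleCat.of R R))
          (Ideal.span (f '' (↑Tᶜ : Set (Fin c))) : Set R))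
      ≃ₗ[R]
      ↥((localCohomology (Ideal.span (f '' (↑T : Set (Fin c)))) T.card).obj
          (ModuleCat.of R (R ⧸ Ideal.span (f '' (↑Tᶜ : Set (Fin c))))))) := by
  set I := Ideal.span (Set.range f) with hI
  set J := Ideal.span (f '' (↑T : Set (Fin c))) with hJ
  let A := Tᶜ.toList.map f
  let B := T.toList.map f
  have hA : A.length = Tᶜ.card := by simp [A]
  have hB : B.length = T.card := by simp [B]
  have hcard : T.card + A.length = c := by simp [hA]
  have hAI : ∀ r ∈ A, r ∈ I := by
    intro r hr
    obtain ⟨i, -, rfl⟩ := List.mem_map.1 hr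
    exact Ideal.subset_span ⟨i, rfl⟩
  have hBJ : ∀ r ∈ B, r ∈ J := by
    intro r hr
    obtain ⟨i, hi, rfl⟩ := List.mem_map.1 hr
    exact Ideal.subset_span ⟨i, by simpa using hi, rfl⟩
  have hJI : J ≤ I := Ideal.span_mono (Set.image_subset_range _ _)
  have hreg : RingTheory.Sequence.IsWeaklyRegular R (A ++ B) := by
    have := isWeaklyRegular_map_of_nodup hperm (l := Tᶜ.toList ++ T.toList)
      (by
        rw [List.nodup_append']
        refine ⟨Finset.nodup_toList _, Finset.nodup_toList _, fun a h1 h2 => ?_⟩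
        simp at h1 h2
        exact h1 h2)
      (by intro x; simp [em'])
    rwa [List.map_append] at this
  have hvan := LC.vanishing (A ++ B) (I := I) (fun r hr => (List.mem_append.1 hr).elim (hAI r) (fun h => hJI (hBJ r h))) R hreg
  obtain ⟨hregA, hregB⟩ := (RingTheory.Sequence.isWeaklyRegular_append_iff _ _ _).1 hreg
  obtain ⟨ψ, hψ, hψ'⟩ := LC.exists_iso_torsion (I := I) A T.card c hcard.symm R hregA
    (fun j hj => hvan j (by rw [List.length_append, hB]; lia))
  -- `A` kills `R ⧸ (A)`, and `B` kills the further quotient; together they generate `I`.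
  have hkill : ∀ r ∈ I, ∀ m : (R ⧸ (Ideal.ofList A • ⊤ : Submodule R R)) ⧸
      (Ideal.ofList B • ⊤ : Submodule R (R ⧸ (Ideal.ofList A • ⊤ : Submodule R R))), r • m = 0 := by
    intro r hr
    refine Module.mem_annihilator.1 ((Ideal.span_le.2 ?_ : I ≤ _) hr)
    rintro _ ⟨i, rfl⟩
    refine Module.mem_annihilator.2 fun m => ?_
    obtain ⟨m, rfl⟩ := Submodule.Quotient.mk_surjective _ m
    by_cases hi : i ∈ T
    · rw [← Submodule.Quotient.mk_smul, Submodule.Quotient.mk_eq_zero]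
      exact Submodule.smul_mem_smul
        (Ideal.subset_span (List.mem_map.2 ⟨i, by simpa using hi, rfl⟩)) trivial
    · obtain ⟨m, rfl⟩ := Submodule.Quotient.mk_surjective _ m
      have hm : f i • m ∈ (Ideal.ofList A • ⊤ : Submodule R R) := Submodule.smul_mem_smul
        (Ideal.subset_span (List.mem_map.2 ⟨i, by simpa using hi, rfl⟩)) trivial
      rw [← Submodule.Quotient.mk_smul, ← Submodule.Quotient.mk_smul,
        (Submodule.Quotient.mk_eq_zero _).2 hm, Submodule.Quotient.mk_zero]
  have hbij := (LC.change_bijective hJI B hBJ _ hregB hkill).1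
  rw [hB] at hbij
  let e1 := LinearEquiv.ofBijective _ hbij
  have hAeq : (Ideal.ofList A • ⊤ : Submodule R R) = Ideal.span (f '' (↑Tᶜ : Set (Fin c))) := by
    rw [← ofList_map_toList]; simp [A]
  let e2 := LC.mapEquiv J T.card (Submodule.quotEquivOfEq _ _ hAeq)
  let e3 := localCohomologyEquiv J T.card (ModuleCat.of R (R ⧸ Ideal.span (f '' (↑Tᶜ : Set (Fin c)))))
  let e0 := localCohomologyEquiv I c (ModuleCat.of R R)
  let φ := e0.symm.toLinearMap ∘ₗ ψ
  have hφ : LinearMap.range φ = Submodule.torsionBySet R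
      ↥((localCohomology I c).obj (ModuleCat.of R R))
      (Ideal.span (f '' (↑Tᶜ : Set (Fin c))) : Set R) := by
    rw [← ofList_map_toList f Tᶜ]
    refine Eq.trans ?_ (Submodule.torsionBySet_eq_torsionBySet_span {r | r ∈ A})
    ext y
    rw [Submodule.mem_torsionBySet_iff]
    have key := hψ' (e0 y)
    refine ⟨?_, fun h => ?_⟩
    · rintro ⟨u, rfl⟩ ⟨a, ha⟩
      refine e0.injective ?_
      rw [map_smul, map_zero]
      exact key.1 ⟨u, (e0.apply_symm_apply _).symm⟩ a ha
    · obtain ⟨u, hu⟩ := key.2 fun r hr => by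
        rw [← map_smul, h ⟨r, hr⟩, map_zero]
      exact ⟨u, (congrArg e0.symm hu).trans (e0.symm_apply_apply y)⟩
  let e4 := (LinearEquiv.ofInjective φ (e0.symm.injective.comp hψ)).trans (LinearEquiv.ofEq _ _ hφ)
  exact ⟨e4.symm.trans (e1.trans (e2.trans e3.symm))⟩
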